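/- Let X : G → L⁰_P(Ω,ℝ) be a cylindrical random variable on a separable Hilbert space G, and (F_n) a sequence of Hilbert–Schmidt operators G → H converging to F in the Hilbert–Schmidt norm. Then the sequence of Radonified random variables (F_n X) converges in probability in H to FX. -/

import Mathlib

open MeasureTheory Filter Topology RealInnerProductSpace

noncomputable section

/-
Integrating the inequality `E[1 - cos (X g)] ≤ η + C ‖g‖²`, which expresses the continuity of `X`
at `0`, over a Gaussian `g = T* x` with `x` standard on a finite-dimensional space turns the left
side into `E[1 - exp (-‖T X‖² / 2)]` and the right side into `η + C ‖T‖²`, with the Hilbert–Schmidt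
norm of `T` (Minlos' inequality). Finite-dimensional projections give the same bound for every
Hilbert–Schmidt `T`. For `T = F_k - F₀` the bound is eventually smaller than any prescribed
number, and Markov's inequality yields convergence in probability.
-/

open ProbabilityTheory ContinuousLinearMap

lemma norm_sq_apply_eq_sum_sum {E G ι : Type*} [NormedAddCommGroup E] [InnerProductSpace ℝ E]
    [NormedAddCommGroup G] [InnerProductSpace ℝ G] [Fintype ι] (b : OrthonormalBasis ι ℝ E)
    (T : E →ₗ[ℝ] G) (x : E) :
    ‖T x‖ ^ 2 = ∑ i, ∑ j, ⟪b i, x⟫ * ⟪b j, x⟫ * ⟪T (b i), T (b j)⟫ := by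
  conv_lhs => rw [← b.sum_repr' x, map_sum, ← real_inner_self_eq_norm_sq]
  simp only [map_smul, sum_inner, inner_sum, real_inner_smul_left, real_inner_smul_right]
  exact Finset.sum_congr rfl fun i _ ↦ Finset.sum_congr rfl fun j _ ↦ by
    rw [real_inner_comm (T (b i))]; ring

section StdGaussian

variable {E : Type*} [NormedAddCommGroup E] [InnerProductSpace ℝ E] [FiniteDimensional ℝ E]
  [MeasurableSpace E] [BorelSpace E]

lemma memLp_two_inner_stdGaussian (s : E) : MemLp (fun x ↦ ⟪s, x⟫) 2 (stdGaussian E) :=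
  IsGaussian.memLp_two_id.const_inner s

lemma integral_inner_mul_inner_stdGaussian (s t : E) :
    ∫ x, ⟪s, x⟫ * ⟪t, x⟫ ∂stdGaussian E = ⟪s, t⟫ := by
  have h := covarianceBilin_apply (IsGaussian.memLp_two_id (μ := stdGaussian E)) s t
  simpa only [covarianceBilin_stdGaussian, id_eq, integral_id_stdGaussian, sub_zero,
    innerSL_apply_apply ℝ] using h.symm

lemma integral_cos_inner_stdGaussian (t : E) :
    ∫ x, Real.cos ⟪t, x⟫ ∂stdGaussian E = Real.exp (-‖t‖ ^ 2 / 2) := by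
  have hint : Integrable (fun x ↦ Complex.exp (⟪x, t⟫ * Complex.I)) (stdGaussian E) :=
    .of_bound (by fun_prop) 1 (ae_of_all _ fun x ↦ (Complex.norm_exp_ofReal_mul_I _).le)
  calc ∫ x, Real.cos ⟪t, x⟫ ∂stdGaussian E
    _ = (charFun (stdGaussian E) t).re := by
      simp_rw [charFun_apply, ← RCLike.re_to_complex, ← integral_re hint, RCLike.re_to_complex,
        Complex.exp_ofReal_mul_I_re, real_inner_comm t]
    _ = Real.exp (-‖t‖ ^ 2 / 2) := by
      rw [charFun_stdGaussian]
      norm_cast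

lemma integrable_norm_sq_apply_stdGaussian {G : Type*} [NormedAddCommGroup G] [NormedSpace ℝ G]
    (T : E →L[ℝ] G) :
    Integrable (fun x ↦ ‖T x‖ ^ 2) (stdGaussian E) :=
  (T.comp_memLp' IsGaussian.memLp_two_id).integrable_norm_pow two_ne_zero

lemma integral_norm_sq_apply_stdGaussian {G ι : Type*} [NormedAddCommGroup G]
    [InnerProductSpace ℝ G] [Fintype ι] (b : OrthonormalBasis ι ℝ E) (T : E →L[ℝ] G) :
    ∫ x, ‖T x‖ ^ 2 ∂stdGaussian E = ∑ i, ‖T (b i)‖ ^ 2 := by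
  classical
  have hint (i j : ι) :
      Integrable (fun x ↦ ⟪b i, x⟫ * ⟪b j, x⟫ * ⟪T (b i), T (b j)⟫) (stdGaussian E) :=
    ((memLp_two_inner_stdGaussian _).integrable_mul (memLp_two_inner_stdGaussian _)).mul_const _
  calc ∫ x, ‖T x‖ ^ 2 ∂stdGaussian E
    _ = ∑ i, ∑ j, ∫ x, ⟪b i, x⟫ * ⟪b j, x⟫ * ⟪T (b i), T (b j)⟫ ∂stdGaussian E := by
      simp_rw [← coe_coe T, norm_sq_apply_eq_sum_sum b (T : E →ₗ[ℝ] G), coe_coe]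
      rw [integral_finsetSum _ fun i _ ↦ integrable_finsetSum _ fun j _ ↦ hint i j]
      exact Finset.sum_congr rfl fun i _ ↦ integral_finsetSum _ fun j _ ↦ hint i j
    _ = ∑ i, ‖T (b i)‖ ^ 2 := by
      simp [integral_mul_const, integral_inner_mul_inner_stdGaussian, b.inner_eq_ite]

lemma integral_integral_one_sub_cos_inner_stdGaussian {Ω : Type*} {mΩ : MeasurableSpace Ω}
    {μ : Measure Ω} [IsFiniteMeasure μ] {f : Ω → E} (hf : AEMeasurable f μ) :
    ∫ x, ∫ ω, (1 - Real.cos ⟪f ω, x⟫) ∂μ ∂stdGaussian E =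
      ∫ ω, (1 - Real.exp (-‖f ω‖ ^ 2 / 2)) ∂μ := by
  have hcos (t : E) : Integrable (fun x ↦ Real.cos ⟪t, x⟫) (stdGaussian E) :=
    .of_bound (by fun_prop) 1 (ae_of_all _ fun x ↦ Real.abs_cos_le_one _)
  have hint : Integrable (fun p : E × Ω ↦ 1 - Real.cos ⟪f p.2, p.1⟫) ((stdGaussian E).prod μ) := by
    have hinner : AEMeasurable (fun p : E × Ω ↦ ⟪f p.2, p.1⟫) ((stdGaussian E).prod μ) :=
      hf.comp_snd.inner measurable_fst.aemeasurable
    exact (integrable_const 1).sub <| .of_bound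
      (Real.continuous_cos.comp_aestronglyMeasurable hinner.aestronglyMeasurable) 1
      (ae_of_all _ fun p ↦ Real.abs_cos_le_one _)
  rw [integral_integral_swap hint]
  congr with ω
  rw [integral_sub (integrable_const 1) (hcos _), integral_cos_inner_stdGaussian]
  simp

end StdGaussian

lemma hasSum_norm_sq_apply_hilbertBasis {𝕜 G E ι κ : Type*} [RCLike 𝕜]
    [NormedAddCommGroup G] [InnerProductSpace 𝕜 G] [CompleteSpace G]
    [NormedAddCommGroup E] [InnerProductSpace 𝕜 E] [CompleteSpace E] [Fintype κ]
    (g : HilbertBasis ι 𝕜 G) (b : OrthonormalBasis κ 𝕜 E) (T : G →L[𝕜] E) :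
    HasSum (fun i ↦ ‖T (g i)‖ ^ 2) (∑ k, ‖adjoint T (b k)‖ ^ 2) := by
  have hparseval (k : κ) : HasSum (fun i ↦ ‖inner 𝕜 (b k) (T (g i))‖ ^ 2)
      (‖adjoint T (b k)‖ ^ 2) := by
    simpa [HilbertBasis.repr_apply_apply, norm_inner_symm, adjoint_inner_right]
      using lp.hasSum_norm (p := 2) (by norm_num) (g.repr (adjoint T (b k)))
  simpa only [b.sum_sq_norm_inner_right] using hasSum_sum fun k (_ : k ∈ Finset.univ) ↦ hparseval k

lemma norm_sub_starProjection_le {𝕜 H : Type*} [RCLike 𝕜] [NormedAddCommGroup H]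
    [InnerProductSpace 𝕜 H] (K : Submodule 𝕜 H) [K.HasOrthogonalProjection] (x : H) {y : H}
    (hy : y ∈ K) : ‖x - K.starProjection x‖ ≤ ‖x - y‖ := by
  rw [K.starProjection_minimal]
  exact ciInf_le ⟨0, Set.forall_mem_range.2 fun _ ↦ norm_nonneg _⟩ (⟨y, hy⟩ : K)

lemma exists_finiteDimensional_tendsto_starProjection (𝕜 : Type*) {H Ω : Type*} [RCLike 𝕜]
    [NormedAddCommGroup H] [InnerProductSpace 𝕜 H] {mΩ : MeasurableSpace Ω} {μ : Measure Ω}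
    {f : Ω → H} (hf : AEStronglyMeasurable f μ) :
    ∃ (K : ℕ → Submodule 𝕜 H) (_ : ∀ n, FiniteDimensional 𝕜 (K n)),
      ∀ᵐ ω ∂μ, Tendsto (fun n ↦ (K n).starProjection (f ω)) atTop (𝓝 (f ω)) := by
  let s := hf.stronglyMeasurable_mk.approx
  have hfin (n : ℕ) : FiniteDimensional 𝕜 (Submodule.span 𝕜 (Set.range (s n))) :=
    .span_of_finite 𝕜 (s n).finite_range
  refine ⟨fun n ↦ Submodule.span 𝕜 (Set.range (s n)), hfin, ?_⟩
  filter_upwards [hf.ae_eq_mk] with ω hω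
  have hs : Tendsto (fun n ↦ ‖f ω - s n ω‖) atTop (𝓝 0) := by
    rw [hω]
    simpa using ((hf.stronglyMeasurable_mk.tendsto_approx ω).const_sub (hf.mk f ω)).norm
  refine tendsto_iff_norm_sub_tendsto_zero.2 (squeeze_zero (fun _ ↦ norm_nonneg _) (fun n ↦ ?_) hs)
  rw [norm_sub_rev]
  exact norm_sub_starProjection_le _ _ (Submodule.subset_span ⟨ω, rfl⟩)

section ConvergenceInMeasure

variable {Ω E κ : Type*} {mΩ : MeasurableSpace Ω} {μ : Measure Ω} [IsFiniteMeasure μ]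
  {l : Filter κ}

lemma tendsto_integral_comp_of_tendstoInMeasure {F : Type*} [PseudoEMetricSpace E]
    [NormedAddCommGroup F]
    [NormedSpace ℝ F] [l.IsCountablyGenerated] {f : κ → Ω → E} {f₀ : Ω → E} {φ : E → F} {C : ℝ}
    (hf : ∀ k, AEStronglyMeasurable (f k) μ) (hlim : TendstoInMeasure μ f l f₀)
    (hφ : Continuous φ) (hC : ∀ x, ‖φ x‖ ≤ C) :
    Tendsto (fun k ↦ ∫ ω, φ (f k ω) ∂μ) l (𝓝 (∫ ω, φ (f₀ ω) ∂μ)) := by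
  refine tendsto_of_subseq_tendsto fun u hu ↦ ?_
  obtain ⟨v, -, hv⟩ := (hlim.comp hu).exists_seq_tendsto_ae
  refine ⟨v, tendsto_integral_of_dominated_convergence (fun _ ↦ C)
    (fun n ↦ hφ.comp_aestronglyMeasurable (hf _)) (integrable_const C)
    (fun n ↦ ae_of_all _ fun ω ↦ hC _) ?_⟩
  filter_upwards [hv] with ω hω using (hφ.tendsto _).comp hω

lemma tendstoInMeasure_of_tendsto_integral_comp_norm_sub [SeminormedAddCommGroup E]
    {f : κ → Ω → E} {f₀ : Ω → E} {φ : ℝ → ℝ}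
    (hφ : StrictMonoOn φ (Set.Ici 0)) (hφ₀ : 0 ≤ φ 0)
    (hint : ∀ k, Integrable (fun ω ↦ φ ‖f k ω - f₀ ω‖) μ)
    (hlim : Tendsto (fun k ↦ ∫ ω, φ ‖f k ω - f₀ ω‖ ∂μ) l (𝓝 0)) :
    TendstoInMeasure μ f l f₀ := by
  rw [tendstoInMeasure_iff_measureReal_norm]
  intro ε hε
  have hφε : 0 < φ ε := hφ₀.trans_lt (hφ Set.self_mem_Ici hε.le hε)
  have hnonneg (x : E) : 0 ≤ φ ‖x‖ :=
    hφ₀.trans (hφ.monotoneOn Set.self_mem_Ici (norm_nonneg x) (norm_nonneg x))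
  have hmarkov (k : κ) :
      μ.real {ω | ε ≤ ‖f k ω - f₀ ω‖} ≤ (∫ ω, φ ‖f k ω - f₀ ω‖ ∂μ) / φ ε := by
    rw [le_div_iff₀' hφε]
    calc φ ε * μ.real {ω | ε ≤ ‖f k ω - f₀ ω‖}
      _ ≤ φ ε * μ.real {ω | φ ε ≤ φ ‖f k ω - f₀ ω‖} := by
        refine mul_le_mul_of_nonneg_left (measureReal_mono fun ω hω ↦ ?_) hφε.le
        exact hφ.monotoneOn hε.le (norm_nonneg _) hω
      _ ≤ ∫ ω, φ ‖f k ω - f₀ ω‖ ∂μ :=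
        mul_meas_ge_le_integral_of_nonneg (ae_of_all _ fun ω ↦ hnonneg _) (hint k) _
  refine squeeze_zero (fun k ↦ measureReal_nonneg) hmarkov ?_
  simpa using hlim.div_const (φ ε)

end ConvergenceInMeasure

lemma exists_le_add_mul_norm_sq_of_tendsto_zero {G : Type*} [SeminormedAddCommGroup G] {φ : G → ℝ}
    {M η : ℝ} (hφ : Tendsto φ (𝓝 0) (𝓝 0)) (hM : ∀ g, φ g ≤ M) (hη : 0 < η) :
    ∃ C, 0 ≤ C ∧ ∀ g, φ g ≤ η + C * ‖g‖ ^ 2 := by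
  obtain ⟨δ, hδ, hball⟩ := Metric.eventually_nhds_iff.1 (hφ.eventually_lt_const hη)
  refine ⟨|M| / δ ^ 2, by positivity, fun g ↦ ?_⟩
  rcases lt_or_ge ‖g‖ δ with hg | hg
  · calc φ g ≤ η := (hball (by rwa [dist_zero_right])).le
      _ ≤ η + |M| / δ ^ 2 * ‖g‖ ^ 2 := le_add_of_nonneg_right (by positivity)
  · calc φ g ≤ |M| := (hM g).trans (le_abs_self M)
      _ = |M| / δ ^ 2 * δ ^ 2 := by field_simp
      _ ≤ |M| / δ ^ 2 * ‖g‖ ^ 2 := by gcongr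
      _ ≤ η + |M| / δ ^ 2 * ‖g‖ ^ 2 := le_add_of_nonneg_left hη.le

lemma strictMonoOn_one_sub_exp_neg_sq_div_two :
    StrictMonoOn (fun r : ℝ ↦ 1 - Real.exp (-r ^ 2 / 2)) (Set.Ici 0) := by
  intro r hr s _ hrs
  have hsq : r ^ 2 < s ^ 2 := pow_lt_pow_left₀ hrs hr two_ne_zero
  exact sub_lt_sub_left (Real.exp_lt_exp.2 (by linarith)) 1

lemma one_sub_exp_neg_sq_div_two_mem_Icc (r : ℝ) :
    1 - Real.exp (-r ^ 2 / 2) ∈ Set.Icc 0 1 :=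
  ⟨sub_nonneg.2 (Real.exp_le_one_iff.2 (by linarith [sq_nonneg r])),
    sub_le_self 1 (Real.exp_nonneg _)⟩

lemma norm_one_sub_exp_neg_sq_div_two_le (r : ℝ) : ‖1 - Real.exp (-r ^ 2 / 2)‖ ≤ 1 := by
  obtain ⟨hnonneg, hle⟩ := one_sub_exp_neg_sq_div_two_mem_Icc r
  rwa [Real.norm_of_nonneg hnonneg]

section Radonification

variable {G H Ω : Type*} [NormedAddCommGroup G] [InnerProductSpace ℝ G] [CompleteSpace G]
  [NormedAddCommGroup H] [InnerProductSpace ℝ H] [CompleteSpace H]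
  {mΩ : MeasurableSpace Ω} {P : Measure Ω} {X : G → Ω → ℝ} {T : G →L[ℝ] H} {D : Ω → H}

/-- `D` is a Radonification of the cylindrical random variable `X` by `T`: an `H`-valued random
variable inducing `h ↦ X (T* h)`. Strong measurability makes the notion meaningful when `H` is not
separable. -/
structure IsRadonification (P : Measure Ω) (X : G → Ω → ℝ) (T : G →L[ℝ] H) (D : Ω → H) :
    Prop where
  aestronglyMeasurable : AEStronglyMeasurable D P
  ae_inner_eq (h : H) : ∀ᵐ ω ∂P, ⟪D ω, h⟫ = X (adjoint T h) ω

namespace IsRadonification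

lemma sub {S : G →L[ℝ] H} {D' : Ω → H}
    (hadd : ∀ g g', ∀ᵐ ω ∂P, X (g + g') ω = X g ω + X g' ω)
    (hT : IsRadonification P X T D) (hS : IsRadonification P X S D') :
    IsRadonification P X (T - S) (D - D') where
  aestronglyMeasurable := hT.aestronglyMeasurable.sub hS.aestronglyMeasurable
  ae_inner_eq h := by
    filter_upwards [hT.ae_inner_eq h, hS.ae_inner_eq h, hadd (adjoint (T - S) h) (adjoint S h)]
      with ω hTω hSω hω
    have hsum : adjoint (T - S) h + adjoint S h = adjoint T h := by simp
    rw [hsum] at hω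
    rw [Pi.sub_apply, inner_sub_left, hTω, hSω, hω, add_sub_cancel_right]

lemma clm_comp {E : Type*} [NormedAddCommGroup E] [InnerProductSpace ℝ E] [CompleteSpace E]
    (hT : IsRadonification P X T D) (S : H →L[ℝ] E) :
    IsRadonification P X (S ∘L T) (fun ω ↦ S (D ω)) where
  aestronglyMeasurable := S.continuous.comp_aestronglyMeasurable hT.aestronglyMeasurable
  ae_inner_eq x := by
    simpa only [adjoint_comp, comp_apply, adjoint_inner_right] using hT.ae_inner_eq (adjoint S x)

variable [IsFiniteMeasure P] {ι : Type*} {η C : ℝ}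

lemma integral_one_sub_exp_le_of_finiteDimensional {E : Type*} [NormedAddCommGroup E]
    [InnerProductSpace ℝ E] [FiniteDimensional ℝ E] {T : G →L[ℝ] E} {D : Ω → E}
    (bG : HilbertBasis ι ℝ G) (hX : ∀ g, ∫ ω, (1 - Real.cos (X g ω)) ∂P ≤ η + C * ‖g‖ ^ 2)
    (hT : IsRadonification P X T D) :
    ∫ ω, (1 - Real.exp (-‖D ω‖ ^ 2 / 2)) ∂P ≤ η + C * ∑' i, ‖T (bG i)‖ ^ 2 := by
  borelize E
  have hcos (x : E) :
      ∫ ω, (1 - Real.cos ⟪D ω, x⟫) ∂P ≤ η + C * ‖adjoint T x‖ ^ 2 := by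
    refine (integral_congr_ae ?_).trans_le (hX (adjoint T x))
    filter_upwards [hT.ae_inner_eq x] with ω hω
    rw [hω]
  have hint : Integrable (fun x ↦ C * ‖adjoint T x‖ ^ 2) (stdGaussian E) :=
    (integrable_norm_sq_apply_stdGaussian _).const_mul C
  calc ∫ ω, (1 - Real.exp (-‖D ω‖ ^ 2 / 2)) ∂P
    _ = ∫ x, ∫ ω, (1 - Real.cos ⟪D ω, x⟫) ∂P ∂stdGaussian E :=
      (integral_integral_one_sub_cos_inner_stdGaussian hT.aestronglyMeasurable.aemeasurable).symm
    _ ≤ ∫ x, (η + C * ‖adjoint T x‖ ^ 2) ∂stdGaussian E :=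
      integral_mono_of_nonneg
        (ae_of_all _ fun x ↦ integral_nonneg fun ω ↦ sub_nonneg.2 (Real.cos_le_one _))
        ((integrable_const η).add hint) (ae_of_all _ hcos)
    _ = η + C * ∑ k, ‖adjoint T (stdOrthonormalBasis ℝ E k)‖ ^ 2 := by
      rw [integral_add (integrable_const η) hint, integral_const_mul,
        integral_norm_sq_apply_stdGaussian (stdOrthonormalBasis ℝ E)]
      simp
    _ = η + C * ∑' i, ‖T (bG i)‖ ^ 2 := by
      rw [(hasSum_norm_sq_apply_hilbertBasis bG (stdOrthonormalBasis ℝ E) T).tsum_eq]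

lemma integrable_one_sub_exp (hT : IsRadonification P X T D) :
    Integrable (fun ω ↦ 1 - Real.exp (-‖D ω‖ ^ 2 / 2)) P :=
  .of_bound (Continuous.comp_aestronglyMeasurable
    (g := fun y : H ↦ 1 - Real.exp (-‖y‖ ^ 2 / 2)) (by fun_prop) hT.aestronglyMeasurable) 1
    (ae_of_all _ fun ω ↦ norm_one_sub_exp_neg_sq_div_two_le _)

lemma integral_one_sub_exp_le (bG : HilbertBasis ι ℝ G) (hC : 0 ≤ C)
    (hX : ∀ g, ∫ ω, (1 - Real.cos (X g ω)) ∂P ≤ η + C * ‖g‖ ^ 2)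
    (hHS : Summable fun i ↦ ‖T (bG i)‖ ^ 2) (hT : IsRadonification P X T D) :
    ∫ ω, (1 - Real.exp (-‖D ω‖ ^ 2 / 2)) ∂P ≤ η + C * ∑' i, ‖T (bG i)‖ ^ 2 := by
  obtain ⟨K, _, hK⟩ := exists_finiteDimensional_tendsto_starProjection ℝ hT.aestronglyMeasurable
  have hproj (n : ℕ) : ∫ ω, (1 - Real.exp (-‖(K n).starProjection (D ω)‖ ^ 2 / 2)) ∂P ≤
      η + C * ∑' i, ‖T (bG i)‖ ^ 2 := by
    have hle (i : ι) : ‖(K n).orthogonalProjectionOnto (T (bG i))‖ ^ 2 ≤ ‖T (bG i)‖ ^ 2 := by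
      gcongr
      exact (K n).norm_orthogonalProjectionOnto_apply_le _
    have hTK := hT.clm_comp (K n).orthogonalProjectionOnto
    refine (hTK.integral_one_sub_exp_le_of_finiteDimensional bG hX).trans ?_
    refine add_le_add_right (mul_le_mul_of_nonneg_left ?_ hC) η
    exact (hHS.of_nonneg_of_le (fun i ↦ sq_nonneg _) hle).tsum_le_tsum hle hHS
  refine le_of_tendsto' (tendsto_integral_of_dominated_convergence (fun _ ↦ 1)
    (fun n ↦ (hT.clm_comp (K n).starProjection).integrable_one_sub_exp.aestronglyMeasurable)
    (integrable_const 1)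
    (fun n ↦ ae_of_all _ fun ω ↦ norm_one_sub_exp_neg_sq_div_two_le _) ?_) hproj
  filter_upwards [hK] with ω hω
  exact ((Real.continuous_exp.tendsto _).comp ((hω.norm.pow 2).neg.div_const 2)).const_sub 1

end IsRadonification

end Radonification

lemma ae_apply_zero_eq_zero {G Ω : Type*} [AddZeroClass G] {mΩ : MeasurableSpace Ω}
    {P : Measure Ω} {X : G → Ω → ℝ} (hadd : ∀ g g', ∀ᵐ ω ∂P, X (g + g') ω = X g ω + X g' ω) :
    X 0 =ᵐ[P] 0 := by
  filter_upwards [hadd 0 0] with ω hω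
  simpa using hω

lemma exists_integral_one_sub_cos_le {G Ω : Type*} [SeminormedAddCommGroup G]
    {mΩ : MeasurableSpace Ω} {P : Measure Ω} [IsFiniteMeasure P] {X : G → Ω → ℝ}
    (hX : ∀ g, AEStronglyMeasurable (X g) P)
    (hadd : ∀ g g', ∀ᵐ ω ∂P, X (g + g') ω = X g ω + X g' ω)
    (hcont : TendstoInMeasure P X (𝓝 0) (X 0)) {η : ℝ} (hη : 0 < η) :
    ∃ C, 0 ≤ C ∧ ∀ g, ∫ ω, (1 - Real.cos (X g ω)) ∂P ≤ η + C * ‖g‖ ^ 2 := by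
  have hbound (t : ℝ) : ‖1 - Real.cos t‖ ≤ 2 := by
    rw [Real.norm_eq_abs, abs_of_nonneg (sub_nonneg.2 (Real.cos_le_one t))]
    linarith [Real.neg_one_le_cos t]
  refine exists_le_add_mul_norm_sq_of_tendsto_zero (M := 2 * P.real Set.univ) ?_ (fun g ↦ ?_) hη
  · have hzero : ∫ ω, (1 - Real.cos (X 0 ω)) ∂P = 0 := by
      refine integral_eq_zero_of_ae ?_
      filter_upwards [ae_apply_zero_eq_zero hadd] with ω hω
      simp [hω]
    simpa only [hzero] using tendsto_integral_comp_of_tendstoInMeasure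
      (φ := fun t ↦ 1 - Real.cos t) hX hcont (by fun_prop) hbound
  · exact (le_abs_self _).trans
      (norm_integral_le_of_norm_le_const (ae_of_all _ fun ω ↦ hbound (X g ω)))

theorem stmt6_general {G H Ω ι κ : Type*}
    [NormedAddCommGroup G] [InnerProductSpace ℝ G] [CompleteSpace G]
    [NormedAddCommGroup H] [InnerProductSpace ℝ H] [CompleteSpace H]
    {mΩ : MeasurableSpace Ω} {P : Measure Ω} [IsFiniteMeasure P] {l : Filter κ}
    (bG : HilbertBasis ι ℝ G) {X : G → Ω → ℝ} (hX : ∀ g, AEStronglyMeasurable (X g) P)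
    (hadd : ∀ g g', ∀ᵐ ω ∂P, X (g + g') ω = X g ω + X g' ω)
    (hcont : TendstoInMeasure P X (𝓝 0) (X 0))
    {F : κ → G →L[ℝ] H} {F₀ : G →L[ℝ] H}
    (hHS : ∀ k, Summable fun i ↦ ‖(F k - F₀) (bG i)‖ ^ 2)
    (hconv : Tendsto (fun k ↦ ∑' i, ‖(F k - F₀) (bG i)‖ ^ 2) l (𝓝 0))
    {Y : κ → Ω → H} {Y₀ : Ω → H}
    (hY : ∀ k, IsRadonification P X (F k) (Y k)) (hY₀ : IsRadonification P X F₀ Y₀) :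
    TendstoInMeasure P Y l Y₀ := by
  have hsub (k : κ) : IsRadonification P X (F k - F₀) (Y k - Y₀) := (hY k).sub hadd hY₀
  refine tendstoInMeasure_of_tendsto_integral_comp_norm_sub strictMonoOn_one_sub_exp_neg_sq_div_two
    (by simp) (fun k ↦ (hsub k).integrable_one_sub_exp) ?_
  have hnonneg (k : κ) : 0 ≤ ∫ ω, (1 - Real.exp (-‖Y k ω - Y₀ ω‖ ^ 2 / 2)) ∂P :=
    integral_nonneg fun ω ↦ (one_sub_exp_neg_sq_div_two_mem_Icc _).1
  refine tendsto_order.2 ⟨fun a ha ↦ .of_forall fun k ↦ ha.trans_le (hnonneg k), fun ε hε ↦ ?_⟩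
  obtain ⟨C, hC, hXC⟩ := exists_integral_one_sub_cos_le hX hadd hcont (half_pos hε)
  have hlim : Tendsto (fun k ↦ ε / 2 + C * ∑' i, ‖(F k - F₀) (bG i)‖ ^ 2) l (𝓝 (ε / 2)) := by
    simpa using (hconv.const_mul C).const_add (ε / 2)
  filter_upwards [hlim.eventually_lt_const (half_lt_self hε)] with k hk
  exact ((hsub k).integral_one_sub_exp_le bG hC hXC (hHS k)).trans_lt hk

/-- Let `X : G → L⁰_P(Ω,ℝ)` be a cylindrical random variable on a separable
Hilbert space `G` and `(F_n)` a sequence of Hilbert–Schmidt operators `G → H` converging to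
`F` in the Hilbert–Schmidt norm.  Then the Radonified random variables `F_n X` converge in
probability in `H` to `FX`. -/
theorem stmt6
    {G : Type} [NormedAddCommGroup G] [InnerProductSpace ℝ G] [CompleteSpace G]
    {H : Type} [NormedAddCommGroup H] [InnerProductSpace ℝ H] [CompleteSpace H]
    [MeasurableSpace H] [BorelSpace H] [SecondCountableTopology H]
    {Ω : Type} [MeasurableSpace Ω]
    (P : Measure Ω) (hP : IsProbabilityMeasure P)
    (bG : HilbertBasis ℕ ℝ G)
    -- `X` is a cylindrical random variable, i.e. a linear continuous map into `L⁰_P(Ω,ℝ)`: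
    (X : G → Ω → ℝ)
    (hXmeas : ∀ g, Measurable (X g))
    (hadd : ∀ g g', ∀ᵐ ω ∂P, X (g + g') ω = X g ω + X g' ω)
    (hsmul : ∀ (c : ℝ) (g : G), ∀ᵐ ω ∂P, X (c • g) ω = c * X g ω)
    (hcont : ∀ (g : ℕ → G) (g₀ : G), Tendsto g atTop (𝓝 g₀) →
      TendstoInMeasure P (fun n => X (g n)) atTop (X g₀))
    -- `(F_n)` are Hilbert–Schmidt operators converging to `F₀` in Hilbert–Schmidt norm:
    (F : ℕ → (G →L[ℝ] H)) (F₀ : G →L[ℝ] H)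
    (hHSn : ∀ n, Summable fun i => ‖F n (bG i)‖ ^ 2)
    (hHS0 : Summable fun i => ‖F₀ (bG i)‖ ^ 2)
    (hHSd : ∀ n, Summable fun i => ‖(F n - F₀) (bG i)‖ ^ 2)
    (hconv : Tendsto (fun n => ∑' i, ‖(F n - F₀) (bG i)‖ ^ 2) atTop (𝓝 0))
    -- `Y n` Radonifies `F_n X` and `Y₀` Radonifies `F₀ X`:
    (Y : ℕ → Ω → H) (Y₀ : Ω → H)
    (hYmeas : ∀ n, Measurable (Y n)) (hY₀meas : Measurable Y₀)
    (hY : ∀ n (h : H), ∀ᵐ ω ∂P,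
      ⟪Y n ω, h⟫ = X ((ContinuousLinearMap.adjoint (F n)) h) ω)
    (hY₀ : ∀ h : H, ∀ᵐ ω ∂P,
      ⟪Y₀ ω, h⟫ = X ((ContinuousLinearMap.adjoint F₀) h) ω) :
    TendstoInMeasure P Y atTop Y₀ := by
  exact stmt6_general bG (fun g ↦ (hXmeas g).aestronglyMeasurable) hadd
    (fun ε hε ↦ tendsto_of_seq_tendsto fun g hg ↦ hcont g 0 hg ε hε) hHSd hconv
    (fun n ↦ ⟨(hYmeas n).aestronglyMeasurable, hY n⟩) ⟨hY₀meas.aestronglyMeasurable, hY₀⟩
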